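/- arXiv:2408.17350 — 13 statements merged into one kernel-verified Lean document; each statement's English description precedes it below -/
import Mathlib

section
/- Let X be a real vector space and ⟦·,·⟧ a weak pairing on X. Then the function ‖x‖ := sqrt(⟦x,x⟧) is a norm on X: it is positive definite (‖x‖ > 0 for x ≠ 0 and ‖0‖ = 0), absolutely homogeneous (‖αx‖ = |α|·‖x‖ for all α ∈ ℝ), and satisfies the triangle inequality ‖x+y‖ ≤ ‖x‖ + ‖y‖. -/
open Filter Topology MeasureTheory

/-- A weak pairing on a real vector space `X`. -/
structure WeakPairing (X : Type*) [AddCommGroup X] [Module ℝ X] where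
  pair : X → X → ℝ
  subadd : ∀ x₁ x₂ y : X, pair (x₁ + x₂) y ≤ pair x₁ y + pair x₂ y
  smul_left : ∀ (α : ℝ), 0 ≤ α → ∀ x y : X, pair (α • x) y = α * pair x y
  smul_right : ∀ (α : ℝ), 0 ≤ α → ∀ x y : X, pair x (α • y) = α * pair x y
  neg_neg_eq : ∀ x y : X, pair (-x) (-y) = pair x y
  pos_def : ∀ x : X, x ≠ 0 → 0 < pair x x
  cauchy_schwarz : ∀ x y : X, pair x y ≤ Real.sqrt (pair x x * pair y y)

namespace WeakPairing

variable {X : Type*} [AddCommGroup X] [Module ℝ X] (P : WeakPairing X)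

theorem pair_zero_left (y : X) : P.pair 0 y = 0 := by
  simpa using P.smul_left 0 le_rfl 0 y

theorem pair_self_nonneg (x : X) : 0 ≤ P.pair x x := by
  rcases eq_or_ne x 0 with rfl | hx
  · exact (P.pair_zero_left 0).ge
  · exact (P.pos_def x hx).le

/-- The norm induced by a weak pairing, as a bare function `X → ℝ` rather than a `Norm` instance,
since `X` may carry several weak pairings. -/
noncomputable def inducedNorm (x : X) : ℝ :=
  √(P.pair x x)

theorem inducedNorm_nonneg (x : X) : 0 ≤ P.inducedNorm x :=
  Real.sqrt_nonneg _

theorem inducedNorm_pos {x : X} (hx : x ≠ 0) : 0 < P.inducedNorm x :=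
  Real.sqrt_pos.mpr (P.pos_def x hx)

theorem inducedNorm_zero : P.inducedNorm 0 = 0 := by
  rw [inducedNorm, pair_zero_left, Real.sqrt_zero]

theorem inducedNorm_neg (x : X) : P.inducedNorm (-x) = P.inducedNorm x := by
  rw [inducedNorm, neg_neg_eq, inducedNorm]

theorem inducedNorm_smul_of_nonneg {α : ℝ} (hα : 0 ≤ α) (x : X) :
    P.inducedNorm (α • x) = α * P.inducedNorm x := by
  calc √(P.pair (α • x) (α • x))
      = √(α * α * P.pair x x) := by rw [P.smul_left α hα, P.smul_right α hα, mul_assoc]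
    _ = α * √(P.pair x x) := by rw [Real.sqrt_mul (mul_self_nonneg α), Real.sqrt_mul_self hα]

theorem inducedNorm_smul (α : ℝ) (x : X) :
    P.inducedNorm (α • x) = |α| * P.inducedNorm x := by
  rcases abs_choice α with h | h
  · rw [← P.inducedNorm_smul_of_nonneg (abs_nonneg α), h]
  · rw [← P.inducedNorm_smul_of_nonneg (abs_nonneg α), h, neg_smul, inducedNorm_neg]

theorem inducedNorm_mul_self (x : X) : P.inducedNorm x * P.inducedNorm x = P.pair x x :=
  Real.mul_self_sqrt (P.pair_self_nonneg x)

theorem pair_le_inducedNorm_mul_inducedNorm (x y : X) :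
    P.pair x y ≤ P.inducedNorm x * P.inducedNorm y :=
  (P.cauchy_schwarz x y).trans_eq (Real.sqrt_mul (P.pair_self_nonneg x) _)

theorem inducedNorm_add_le (x y : X) :
    P.inducedNorm (x + y) ≤ P.inducedNorm x + P.inducedNorm y := by
  rcases eq_or_ne (x + y) 0 with hxy | hxy
  · rw [hxy, inducedNorm_zero]
    exact add_nonneg (P.inducedNorm_nonneg x) (P.inducedNorm_nonneg y)
  refine le_of_mul_le_mul_right ?_ (P.inducedNorm_pos hxy)
  calc P.inducedNorm (x + y) * P.inducedNorm (x + y)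
      = P.pair (x + y) (x + y) := P.inducedNorm_mul_self (x + y)
    _ ≤ P.pair x (x + y) + P.pair y (x + y) := P.subadd x y (x + y)
    _ ≤ P.inducedNorm x * P.inducedNorm (x + y) + P.inducedNorm y * P.inducedNorm (x + y) :=
        add_le_add (P.pair_le_inducedNorm_mul_inducedNorm x _)
          (P.pair_le_inducedNorm_mul_inducedNorm y _)
    _ = (P.inducedNorm x + P.inducedNorm y) * P.inducedNorm (x + y) := (add_mul _ _ _).symm

end WeakPairing

/-- the function `x ↦ √⟦x,x⟧` induced by a weak pairing is a norm. -/
theorem weakPairing_induces_norm (X : Type*) [AddCommGroup X] [Module ℝ X]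
    (P : WeakPairing X) (N : X → ℝ) (hN : ∀ z : X, N z = Real.sqrt (P.pair z z)) :
    (∀ x : X, x ≠ 0 → 0 < N x) ∧ (N (0 : X) = 0) ∧
    (∀ (α : ℝ) (x : X), N (α • x) = |α| * N x) ∧
    (∀ x y : X, N (x + y) ≤ N x + N y) := by
  obtain rfl : N = P.inducedNorm := funext hN
  exact ⟨fun _ hx => P.inducedNorm_pos hx, P.inducedNorm_zero, P.inducedNorm_smul,
    P.inducedNorm_add_le⟩
end

section
/- Let (X,‖·‖) be a real normed space, a < b real numbers, and x : (a,b) → X a curve differentiable at t ∈ (a,b) with derivative v. Let f(s) := ‖x(s)‖. Suppose L₊ and L₋ are real numbers such that (‖x(t)+hv‖−‖x(t)‖)/h → L₊ as h → 0⁺ and (‖x(t)+hv‖−‖x(t)‖)/h → L₋ as h → 0⁻. Then f(t)·limsup_{h→0⁺}(f(t+h)−f(t))/h = f(t)·liminf_{h→0⁺}(f(t+h)−f(t))/h = ‖x(t)‖·L₊, and f(t)·limsup_{h→0⁻}(f(t+h)−f(t))/h = f(t)·liminf_{h→0⁻}(f(t+h)−f(t))/h = ‖x(t)‖·L₋. In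 particular, if f(t) ≠ 0 then the one-sided derivatives of f at t exist and equal L₊ and L₋ respectively. -/
open Filter Topology

/-!
A locally Lipschitz map `g` sends two curves that agree up to `o(h)` to curves that agree up to
`o(h)`. A curve `x` differentiable at `t` agrees up to `o(h)` with its tangent line
`h ↦ x t + h • v`, so the difference quotients of `g ∘ x` at `t` have the same limits as the
difference quotients of `g` along the tangent line. The norm is `1`-Lipschitz.
-/

section LipschitzAlongCurves

open Asymptotics
open scoped NNReal

variable {ι 𝕜 E F : Type*} [SeminormedAddCommGroup E] [SeminormedAddCommGroup F]

theorem isLittleO_comp_sub_comp_of_lipschitzOnWith {G : Type*} [Norm G] {g : E → F} {K : ℝ≥0}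
    {U : Set E} (hg : LipschitzOnWith K g U) {l : Filter ι} {u w : ι → E} {k : ι → G}
    (hu : ∀ᶠ i in l, u i ∈ U) (hw : ∀ᶠ i in l, w i ∈ U)
    (huw : (fun i ↦ u i - w i) =o[l] k) :
    (fun i ↦ g (u i) - g (w i)) =o[l] k := by
  refine IsBigO.trans_isLittleO (.of_bound K ?_) huw
  filter_upwards [hu, hw] with i hui hwi using hg.norm_sub_le hui hwi

theorem tendsto_inv_smul_sub_iff_of_isLittleO [NormedDivisionRing 𝕜] [Module 𝕜 F]
    [NormSMulClass 𝕜 F] {l : Filter ι} {u w : ι → F} {k : ι → 𝕜}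
    (huw : (fun i ↦ u i - w i) =o[l] k) (c : ι → F) (L : F) :
    Tendsto (fun i ↦ (k i)⁻¹ • (u i - c i)) l (𝓝 L) ↔
      Tendsto (fun i ↦ (k i)⁻¹ • (w i - c i)) l (𝓝 L) := by
  refine tendsto_iff_of_dist ?_
  simpa only [dist_eq_norm, ← smul_sub, sub_sub_sub_cancel_right, norm_zero] using
    huw.tendsto_inv_smul_nhds_zero.norm

theorem tendsto_const_add_nhdsWithin_preimage {M : Type*} [AddZeroClass M] [TopologicalSpace M]
    [ContinuousAdd M] (s : Set M) (t : M) :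
    Tendsto (t + ·) (𝓝[(t + ·) ⁻¹' s] 0) (𝓝[s] t) := by
  have : ContinuousWithinAt (t + ·) ((t + ·) ⁻¹' s) 0 := by fun_prop
  simpa only [add_zero] using this.tendsto_nhdsWithin (Set.mapsTo_preimage _ s)

variable [NontriviallyNormedField 𝕜] [NormedSpace 𝕜 E] {x : 𝕜 → E} {v : E} {s : Set 𝕜} {t : 𝕜}

theorem isLittleO_sub_tangent_of_hasDerivWithinAt (hx : HasDerivWithinAt x v s t) :
    (fun h ↦ x (t + h) - (x t + h • v)) =o[𝓝[(t + ·) ⁻¹' s] 0] fun h ↦ h := by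
  simpa [Function.comp_def, sub_sub] using
    hx.hasFDerivWithinAt.isLittleO.comp_tendsto (tendsto_const_add_nhdsWithin_preimage s t)

theorem tendsto_inv_smul_comp_sub_iff_tangent [NormedSpace 𝕜 F] {g : E → F} {K : ℝ≥0} {U : Set E}
    (hg : LipschitzOnWith K g U) (hU : U ∈ 𝓝 (x t)) (hx : HasDerivWithinAt x v s t) (L : F) :
    Tendsto (fun h ↦ h⁻¹ • (g (x (t + h)) - g (x t))) (𝓝[(t + ·) ⁻¹' s] 0) (𝓝 L) ↔
      Tendsto (fun h ↦ h⁻¹ • (g (x t + h • v) - g (x t))) (𝓝[(t + ·) ⁻¹' s] 0) (𝓝 L) := by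
  have curve_mem : ∀ᶠ h in 𝓝[(t + ·) ⁻¹' s] 0, x (t + h) ∈ U :=
    (hx.hasFDerivWithinAt.continuousWithinAt.tendsto.comp
      (tendsto_const_add_nhdsWithin_preimage s t)).eventually_mem hU
  have tangent_mem : ∀ᶠ h in 𝓝[(t + ·) ⁻¹' s] 0, x t + h • v ∈ U := by
    have : ContinuousAt (fun h : 𝕜 ↦ x t + h • v) 0 := by fun_prop
    exact nhdsWithin_le_nhds (this.eventually_mem (by simpa using hU))
  exact tendsto_inv_smul_sub_iff_of_isLittleO
    (isLittleO_comp_sub_comp_of_lipschitzOnWith hg curve_mem tangent_mem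
      (isLittleO_sub_tangent_of_hasDerivWithinAt hx)) _ _

end LipschitzAlongCurves

section NormAlongCurves

variable {X : Type*} [SeminormedAddCommGroup X] [NormedSpace ℝ X] {x : ℝ → X} {t : ℝ}

theorem tendsto_norm_comp_sub_div_iff_tangent {v : X} {s : Set ℝ} (hx : HasDerivWithinAt x v s t)
    (L : ℝ) :
    Tendsto (fun h : ℝ ↦ (‖x (t + h)‖ - ‖x t‖) / h) (𝓝[(t + ·) ⁻¹' s] 0) (𝓝 L) ↔
      Tendsto (fun h : ℝ ↦ (‖x t + h • v‖ - ‖x t‖) / h) (𝓝[(t + ·) ⁻¹' s] 0) (𝓝 L) := by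
  simpa only [smul_eq_mul, ← div_eq_inv_mul] using
    tendsto_inv_smul_comp_sub_iff_tangent lipschitzWith_one_norm.lipschitzOnWith univ_mem hx L

theorem dini_derivatives_eq_JMT_pairings_general {vp vm : X}
    (hxp : HasDerivWithinAt x vp (Set.Ioi t) t) (hxm : HasDerivWithinAt x vm (Set.Iio t) t)
    {Lp Lm : ℝ}
    (hLp : Tendsto (fun h : ℝ ↦ (‖x t + h • vp‖ - ‖x t‖) / h) (𝓝[>] 0) (𝓝 Lp))
    (hLm : Tendsto (fun h : ℝ ↦ (‖x t + h • vm‖ - ‖x t‖) / h) (𝓝[<] 0) (𝓝 Lm)) :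
    limsup (fun h : ℝ ↦ (‖x (t + h)‖ - ‖x t‖) / h) (𝓝[>] 0) = Lp ∧
    liminf (fun h : ℝ ↦ (‖x (t + h)‖ - ‖x t‖) / h) (𝓝[>] 0) = Lp ∧
    limsup (fun h : ℝ ↦ (‖x (t + h)‖ - ‖x t‖) / h) (𝓝[<] 0) = Lm ∧
    liminf (fun h : ℝ ↦ (‖x (t + h)‖ - ‖x t‖) / h) (𝓝[<] 0) = Lm ∧
    Tendsto (fun h : ℝ ↦ (‖x (t + h)‖ - ‖x t‖) / h) (𝓝[>] 0) (𝓝 Lp) ∧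
    Tendsto (fun h : ℝ ↦ (‖x (t + h)‖ - ‖x t‖) / h) (𝓝[<] 0) (𝓝 Lm) := by
  have right_deriv : Tendsto (fun h : ℝ ↦ (‖x (t + h)‖ - ‖x t‖) / h) (𝓝[>] 0) (𝓝 Lp) := by
    simpa [hLp] using tendsto_norm_comp_sub_div_iff_tangent hxp Lp
  have left_deriv : Tendsto (fun h : ℝ ↦ (‖x (t + h)‖ - ‖x t‖) / h) (𝓝[<] 0) (𝓝 Lm) := by
    simpa [hLm] using tendsto_norm_comp_sub_div_iff_tangent hxm Lm
  exact ⟨right_deriv.limsup_eq, right_deriv.liminf_eq, left_deriv.limsup_eq, left_deriv.liminf_eq,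
    right_deriv, left_deriv⟩

end NormAlongCurves

/-- Dini derivatives of the norm of a differentiable curve are
expressed through the upper and lower JMT pairings; in particular, away from
zeros of the norm, the one-sided derivatives of `t ↦ ‖x(t)‖` exist. -/
theorem dini_derivatives_eq_JMT_pairings
    (X : Type*) [NormedAddCommGroup X] [NormedSpace ℝ X]
    (a b : ℝ) (hab : a < b) (x : ℝ → X) (t : ℝ) (ht : t ∈ Set.Ioo a b)
    (v : X) (hx : HasDerivAt x v t)
    (f : ℝ → ℝ) (hf : ∀ s : ℝ, f s = ‖x s‖)
    (Lp Lm : ℝ)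
    (hLp : Tendsto (fun h : ℝ => (‖x t + h • v‖ - ‖x t‖) / h) (𝓝[>] (0:ℝ)) (𝓝 Lp))
    (hLm : Tendsto (fun h : ℝ => (‖x t + h • v‖ - ‖x t‖) / h) (𝓝[<] (0:ℝ)) (𝓝 Lm)) :
    f t * limsup (fun h : ℝ => (f (t + h) - f t) / h) (𝓝[>] (0:ℝ)) = ‖x t‖ * Lp ∧
    f t * liminf (fun h : ℝ => (f (t + h) - f t) / h) (𝓝[>] (0:ℝ)) = ‖x t‖ * Lp ∧
    f t * limsup (fun h : ℝ => (f (t + h) - f t) / h) (𝓝[<] (0:ℝ)) = ‖x t‖ * Lm ∧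
    f t * liminf (fun h : ℝ => (f (t + h) - f t) / h) (𝓝[<] (0:ℝ)) = ‖x t‖ * Lm ∧
    (f t ≠ 0 →
      Tendsto (fun h : ℝ => (f (t + h) - f t) / h) (𝓝[>] (0:ℝ)) (𝓝 Lp) ∧
      Tendsto (fun h : ℝ => (f (t + h) - f t) / h) (𝓝[<] (0:ℝ)) (𝓝 Lm)) := by
  obtain ⟨hp_sup, hp_inf, hm_sup, hm_inf, hp, hm⟩ :=
    dini_derivatives_eq_JMT_pairings_general hx.hasDerivWithinAt hx.hasDerivWithinAt hLp hLm
  simp only [hf, hp_sup, hp_inf, hm_sup, hm_inf, hp, hm, and_self, implies_true]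
end

section
/- Let (X,‖·‖) be a real normed space, a < b real numbers, and x : (a,b) → X a curve differentiable at every point of (a,b). Then the function f(t) := ‖x(t)‖ is differentiable at almost every t ∈ (a,b) (with respect to Lebesgue measure). -/
open Filter Topology MeasureTheory

/-!
The norm of a curve inherits from the curve a pointwise Lipschitz bound at every point of
differentiability, so the claim is an instance of Stepanov's theorem, proved here by Malý's
argument. Fix a neighbourhood `U` from a countable basis and a natural constant `K`. If `f`
satisfies `|f y - f t| ≤ K |y - t|` for `y ∈ U`, then the greatest `K`-Lipschitz function below `f`
on `U` and the least one above it both agree with `f` at `t`. By Rademacher's theorem both are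
differentiable at almost every such `t`, and a function squeezed between two differentiable
functions that touch it is differentiable.
-/

open scoped NNReal

section LipschitzMinorant

variable {α : Type*} [PseudoMetricSpace α] {K : ℝ≥0} {f : α → ℝ} {U : Set α} {t : α}

/-- The Pasch–Hausdorff envelope of `f` over `U`: the greatest `K`-Lipschitz function on `α` lying
below `f` on `U`. The infimum is meaningful only when `U` is nonempty and the family is bounded
below; a single point `t ∈ U` with `f t ≤ f y + K * dist t y` for all `y ∈ U` guarantees both. -/
noncomputable def lipschitzMinorant (K : ℝ≥0) (f : α → ℝ) (U : Set α) (s : α) : ℝ :=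
  ⨅ y : U, (f y + K * dist s y)

lemma bddBelow_range_add_mul_dist (h : ∀ y ∈ U, f t ≤ f y + K * dist t y) (s : α) :
    BddBelow (Set.range fun y : U ↦ f y + K * dist s y) := by
  refine ⟨f t - K * dist s t, ?_⟩
  rintro _ ⟨y, rfl⟩
  rw [sub_le_iff_le_add]
  calc f t ≤ f y + K * dist t y := h y y.2
    _ ≤ f y + K * (dist s y + dist s t) := by
      gcongr
      rw [add_comm]
      exact dist_triangle_left _ _ _
    _ = f y + K * dist s y + K * dist s t := by ring

lemma lipschitzWith_lipschitzMinorant (ht : t ∈ U) (h : ∀ y ∈ U, f t ≤ f y + K * dist t y) :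
    LipschitzWith K (lipschitzMinorant K f U) := by
  have : Nonempty U := ⟨t, ht⟩
  refine LipschitzWith.of_le_add_mul K fun s r ↦ ?_
  rw [← sub_le_iff_le_add]
  refine le_ciInf fun y ↦ ?_
  rw [sub_le_iff_le_add]
  calc lipschitzMinorant K f U s ≤ f y + K * dist s y :=
        ciInf_le (bddBelow_range_add_mul_dist h s) y
    _ ≤ f y + K * (dist s r + dist r y) := by
      gcongr
      exact dist_triangle _ _ _
    _ = f y + K * dist r y + K * dist s r := by ring

lemma lipschitzMinorant_le (h : ∀ y ∈ U, f t ≤ f y + K * dist t y) {s : α} (hs : s ∈ U) :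
    lipschitzMinorant K f U s ≤ f s :=
  (ciInf_le (bddBelow_range_add_mul_dist h s) ⟨s, hs⟩).trans_eq (by simp)

lemma lipschitzMinorant_eq (ht : t ∈ U) (h : ∀ y ∈ U, f t ≤ f y + K * dist t y) :
    lipschitzMinorant K f U t = f t :=
  have : Nonempty U := ⟨t, ht⟩
  (lipschitzMinorant_le h ht).antisymm (le_ciInf fun y ↦ h y y.2)

end LipschitzMinorant

section Squeeze

variable {E : Type*} [NormedAddCommGroup E] [NormedSpace ℝ E] {u f v : E → ℝ} {t : E}

lemma hasFDerivAt_zero_of_eventually_norm_le {F : Type*} [NormedAddCommGroup F] [NormedSpace ℝ F]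
    {g : E → F} {w : E → ℝ} (hw : HasFDerivAt w (0 : E →L[ℝ] ℝ) t) (hwt : w t = 0)
    (hgw : ∀ᶠ s in 𝓝 t, ‖g s‖ ≤ w s) : HasFDerivAt g (0 : E →L[ℝ] F) t := by
  have hgt : g t = 0 := norm_le_zero_iff.1 (hgw.self_of_nhds.trans_eq hwt)
  simp only [hasFDerivAt_iff_isLittleO, hwt, hgt, zero_apply, sub_zero] at hw ⊢
  refine Asymptotics.IsBigO.trans_isLittleO (Asymptotics.IsBigO.of_bound' ?_) hw
  filter_upwards [hgw] with s hs
  exact hs.trans (le_abs_self _)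

lemma differentiableAt_of_eventually_le_of_le (hu : DifferentiableAt ℝ u t)
    (hv : DifferentiableAt ℝ v t) (huf : ∀ᶠ s in 𝓝 t, u s ≤ f s) (hfv : ∀ᶠ s in 𝓝 t, f s ≤ v s)
    (hut : u t = f t) (hvt : v t = f t) : DifferentiableAt ℝ f t := by
  have hmin : IsLocalMin (v - u) t := by
    filter_upwards [huf, hfv] with s hus hvs
    simpa [hut, hvt] using hus.trans hvs
  have hgap : HasFDerivAt (v - u) (0 : E →L[ℝ] ℝ) t := by
    have hd := (hv.sub hu).hasFDerivAt
    rwa [hmin.hasFDerivAt_eq_zero hd] at hd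
  have hfu : HasFDerivAt (f - u) (0 : E →L[ℝ] ℝ) t := by
    refine hasFDerivAt_zero_of_eventually_norm_le hgap (by simp [hut, hvt]) ?_
    filter_upwards [huf, hfv] with s hus hvs
    simpa [abs_of_nonneg (sub_nonneg.2 hus)] using hvs
  simpa using hfu.differentiableAt.add hu

end Squeeze

section Stepanov

variable {E : Type*} [NormedAddCommGroup E] [NormedSpace ℝ E] [FiniteDimensional ℝ E]
  [MeasurableSpace E] [BorelSpace E] (μ : Measure E) [μ.IsAddHaarMeasure]

lemma ae_differentiableAt_of_forall_dist_le (K : ℝ≥0) (f : E → ℝ) (U : Set E) :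
    ∀ᵐ t ∂μ, U ∈ 𝓝 t → (∀ y ∈ U, dist (f y) (f t) ≤ K * dist y t) → DifferentiableAt ℝ f t := by
  have below {t : E} (h : ∀ y ∈ U, dist (f y) (f t) ≤ K * dist y t) :
      ∀ y ∈ U, f t ≤ f y + K * dist t y := fun y hy ↦ by
    have := (abs_le.1 (h y hy)).1
    rw [dist_comm t y]
    linarith
  have above {t : E} (h : ∀ y ∈ U, dist (f y) (f t) ≤ K * dist y t) :
      ∀ y ∈ U, (-f) t ≤ (-f) y + K * dist t y := fun y hy ↦ by
    have := (abs_le.1 (h y hy)).2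
    rw [dist_comm t y, Pi.neg_apply, Pi.neg_apply]
    linarith
  by_cases hU : ∃ r ∈ U, ∀ y ∈ U, dist (f y) (f r) ≤ K * dist y r
  · obtain ⟨r, hrU, hr⟩ := hU
    filter_upwards [(lipschitzWith_lipschitzMinorant hrU (below hr)).ae_differentiableAt,
      (lipschitzWith_lipschitzMinorant hrU (above hr)).ae_differentiableAt] with t hu hv htU ht
    have htU' : t ∈ U := mem_of_mem_nhds htU
    refine differentiableAt_of_eventually_le_of_le hu hv.neg ?_ ?_
      (lipschitzMinorant_eq htU' (below ht)) ?_
    · filter_upwards [htU] with s hs using lipschitzMinorant_le (below hr) hs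
    · filter_upwards [htU] with s hs using le_neg_of_le_neg (lipschitzMinorant_le (above hr) hs)
    · simp [lipschitzMinorant_eq htU' (above ht)]
  · exact .of_forall fun t htU ht ↦ (hU ⟨t, mem_of_mem_nhds htU, ht⟩).elim

/-- **Stepanov's theorem** for real-valued functions. -/
theorem ae_differentiableAt_of_isBigO_sub (f : E → ℝ) :
    ∀ᵐ t ∂μ, (fun s ↦ f s - f t) =O[𝓝 t] (fun s ↦ s - t) → DifferentiableAt ℝ f t := by
  obtain ⟨B, hBcount, -, hB⟩ := TopologicalSpace.exists_countable_basis E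
  have hae : ∀ᵐ t ∂μ, ∀ U ∈ B, ∀ n : ℕ, U ∈ 𝓝 t →
      (∀ y ∈ U, dist (f y) (f t) ≤ (n : ℝ≥0) * dist y t) → DifferentiableAt ℝ f t :=
    (ae_ball_iff hBcount).2 fun U _ ↦ ae_all_iff.2 fun n ↦
      ae_differentiableAt_of_forall_dist_le μ n f U
  filter_upwards [hae] with t ht hO
  obtain ⟨C, hC⟩ := hO.bound
  obtain ⟨n, hn⟩ := exists_nat_ge C
  obtain ⟨U, hUB, htU, hUC⟩ := hB.mem_nhds_iff.1 hC
  refine ht U hUB n (hB.mem_nhds hUB htU) fun y hy ↦ ?_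
  have hy' : ‖f y - f t‖ ≤ C * ‖y - t‖ := hUC hy
  calc dist (f y) (f t) ≤ C * dist y t := by simpa only [dist_eq_norm] using hy'
    _ ≤ (n : ℝ≥0) * dist y t := by
      gcongr
      exact_mod_cast hn

theorem curve_norm_differentiable_ae_general {X : Type*} [SeminormedAddCommGroup X] (x : E → X) :
    ∀ᵐ t ∂μ, (fun s ↦ x s - x t) =O[𝓝 t] (fun s ↦ s - t) →
      DifferentiableAt ℝ (fun s ↦ ‖x s‖) t := by
  filter_upwards [ae_differentiableAt_of_isBigO_sub μ fun s ↦ ‖x s‖] with t ht hx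
  have hnorm : (fun s ↦ ‖x s‖ - ‖x t‖) =O[𝓝 t] (fun s ↦ x s - x t) :=
    .of_bound' (.of_forall fun s ↦ abs_norm_sub_norm_le (x s) (x t))
  exact ht (hnorm.trans hx)

end Stepanov

/-- the norm of a curve differentiable on `(a,b)` is
differentiable almost everywhere on `(a,b)`. -/
theorem curve_norm_differentiable_ae
    (X : Type*) [NormedAddCommGroup X] [NormedSpace ℝ X]
    (a b : ℝ) (hab : a < b) (x : ℝ → X)
    (hx : ∀ s ∈ Set.Ioo a b, DifferentiableAt ℝ x s)
    (f : ℝ → ℝ) (hf : ∀ s : ℝ, f s = ‖x s‖) :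
    ∀ᵐ t ∂(volume : Measure ℝ), t ∈ Set.Ioo a b → DifferentiableAt ℝ f t := by
  obtain rfl : f = fun s ↦ ‖x s‖ := funext hf
  filter_upwards [curve_norm_differentiable_ae_general volume x] with t ht hts
  exact ht (hx t hts).isBigO_sub
end

section
/- Let (X,‖·‖) be a real normed space and ⟦·,·⟧ a weak pairing on X compatible with the norm. If ⟦·,·⟧ satisfies the straight angle property (⟦−x,x⟧ = −‖x‖² for all x ∈ X), then it is partially linear in its first argument: ⟦x+ay,y⟧ = ⟦x,y⟧ + a·‖y‖² for all x,y ∈ X and all a ∈ ℝ. -/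
open Filter Topology MeasureTheory

/-!
For fixed `y`, the function `f = ⟦·, y⟧` is sublinear. A sublinear function is linear along every
direction `u` in which it is odd, i.e. `f (-u) = -f u`: positive homogeneity then extends to all
real multiples of `u`, and subadditivity applied to both `x + a • u` and `(x + a • u) - a • u`
gives the two inequalities. The straight angle property is oddness in the direction `u = y`.
-/

theorem map_add_eq_of_subadditive_of_map_neg {G H : Type*} [AddGroup G]
    [AddCommGroup H] [PartialOrder H] [IsOrderedAddMonoid H] {f : G → H}
    (hadd : ∀ x y, f (x + y) ≤ f x + f y) {v : G} (hneg : f (-v) = -f v) (x : G) :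
    f (x + v) = f x + f v := by
  refine le_antisymm (hadd x v) (le_sub_iff_add_le.mp ?_)
  calc f x = f (x + v + -v) := by rw [add_neg_cancel_right]
    _ ≤ f (x + v) + f (-v) := hadd _ _
    _ = f (x + v) - f v := by rw [hneg, sub_eq_add_neg]

theorem map_smul_of_map_smul_nonneg_of_map_neg {R E F : Type*}
    [Ring R] [LinearOrder R] [IsOrderedRing R] [AddCommGroup E] [Module R E]
    [AddCommGroup F] [Module R F] {f : E → F}
    (hsmul : ∀ c : R, 0 ≤ c → ∀ x, f (c • x) = c • f x) {u : E} (hneg : f (-u) = -f u) (a : R) :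
    f (a • u) = a • f u := by
  rcases le_total 0 a with ha | ha
  · exact hsmul a ha u
  · calc f (a • u) = f (-a • -u) := by rw [neg_smul_neg]
      _ = -a • f (-u) := hsmul (-a) (neg_nonneg.mpr ha) (-u)
      _ = a • f u := by rw [hneg, neg_smul_neg]

theorem straight_angle_implies_partial_linearity_general {X : Type*} [AddCommGroup X] [Module ℝ X]
    (P : WeakPairing X) {u y : X} (hneg : P.pair (-u) y = -P.pair u y) (x : X) (a : ℝ) :
    P.pair (x + a • u) y = P.pair x y + a * P.pair u y := by
  have pair_smul (c : ℝ) : P.pair (c • u) y = c * P.pair u y :=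
    map_smul_of_map_smul_nonneg_of_map_neg (f := (P.pair · y))
      (fun c hc x ↦ P.smul_left c hc x y) hneg c
  have pair_neg_smul : P.pair (-(a • u)) y = -P.pair (a • u) y := by
    rw [← neg_smul, pair_smul, pair_smul, neg_mul]
  rw [← pair_smul]
  exact map_add_eq_of_subadditive_of_map_neg (f := (P.pair · y))
    (fun x₁ x₂ ↦ P.subadd x₁ x₂ y) pair_neg_smul x

/-- the straight angle property implies partial linearity in
the first argument. -/
theorem straight_angle_implies_partial_linearity
    (X : Type*) [NormedAddCommGroup X] [NormedSpace ℝ X]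
    (P : WeakPairing X) (hcompat : ∀ x : X, P.pair x x = ‖x‖ ^ 2)
    (hstraight : ∀ x : X, P.pair (-x) x = -‖x‖ ^ 2) :
    ∀ (x y : X) (a : ℝ), P.pair (x + a • y) y = P.pair x y + a * ‖y‖ ^ 2 := by
  intro x y a
  rw [straight_angle_implies_partial_linearity_general P (by rw [hstraight, hcompat]), hcompat]
end

section
/- Let (X,‖·‖) be a real normed space and ⟦·,·⟧ a weak pairing on X compatible with the norm which is partially linear in its first argument, i.e. ⟦x+ay,y⟧ = ⟦x,y⟧ + a·‖y‖² for all x,y ∈ X, a ∈ ℝ. Then for all x,y ∈ X: ⟦x,y⟧₋ ≤ −⟦−x,y⟧ ≤ ⟦x,y⟧ ≤ ⟦x,y⟧₊, where ⟦·,·⟧₊ and ⟦·,·⟧₋ are the upper and lower JMT pairings of the norm ‖·‖. -/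
open Filter Topology MeasureTheory

/-!
Partial linearity and homogeneity give `⟦y + h x, y⟧ = ‖y‖² + h ⟦x, y⟧` for `h ≥ 0`, while
Cauchy–Schwarz bounds the left-hand side by `‖y + h x‖ ‖y‖`. Hence `⟦x, y⟧` lies below every
right difference quotient `‖y‖ (‖y + h x‖ - ‖y‖) / h`, and so below the upper pairing. Replacing
`x` by `-x` turns right quotients into negated left quotients, which gives the bound on the lower
pairing; the middle inequality is subadditivity applied to `x + (-x) = 0`.
-/

section JMTQuotient

variable {X : Type*} [SeminormedAddCommGroup X] [NormedSpace ℝ X]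

/-- The difference quotient of the norm at `y` in the direction `x`, scaled by `‖y‖`. Its limits
as `h → 0⁺` and `h → 0⁻` are the upper and lower JMT pairings of `x` at `y`. -/
noncomputable def jmtQuotient (x y : X) (h : ℝ) : ℝ :=
  ‖y‖ * ((‖y + h • x‖ - ‖y‖) / h)

theorem jmtQuotient_neg_neg (x y : X) (h : ℝ) :
    jmtQuotient (-x) y (-h) = -jmtQuotient x y h := by
  simp only [jmtQuotient, neg_smul_neg, div_neg, mul_neg]

end JMTQuotient

namespace WeakPairing

section Module

variable {X : Type*} [AddCommGroup X] [Module ℝ X] (P : WeakPairing X)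

/-- Partial linearity of a weak pairing in its first argument: additivity when one of the two
summands is a real multiple of the second argument. It is phrased with `⟦y, y⟧` in place of
`‖y‖²`, so that no norm is involved. -/
def IsPartiallyLinear : Prop :=
  ∀ (x y : X) (a : ℝ), P.pair (x + a • y) y = P.pair x y + a * P.pair y y

theorem neg_pair_neg_left_le (x y : X) : -P.pair (-x) y ≤ P.pair x y := by
  have h_sum : P.pair (x + -x) y ≤ P.pair x y + P.pair (-x) y := P.subadd x (-x) y
  rw [add_neg_cancel, pair_zero_left] at h_sum
  linarith

variable {P}

theorem IsPartiallyLinear.pair_self_add_smul (hP : P.IsPartiallyLinear) (x y : X) {h : ℝ}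
    (hh : 0 ≤ h) : P.pair (y + h • x) y = P.pair y y + h * P.pair x y := by
  have h_add := hP (h • x) y 1
  rw [one_smul, one_mul, P.smul_left h hh] at h_add
  rw [add_comm y, h_add, add_comm]

end Module

section Normed

variable {X : Type*} [SeminormedAddCommGroup X] [NormedSpace ℝ X] {P : WeakPairing X}

variable (P) in
/-- Compatibility of a weak pairing with the norm: `⟦x, x⟧ = ‖x‖²`. -/
def IsCompatible : Prop :=
  ∀ x : X, P.pair x x = ‖x‖ ^ 2

theorem IsCompatible.pair_le_norm_mul_norm (hP : P.IsCompatible) (x y : X) :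
    P.pair x y ≤ ‖x‖ * ‖y‖ := by
  calc P.pair x y ≤ √(P.pair x x * P.pair y y) := P.cauchy_schwarz x y
    _ = √((‖x‖ * ‖y‖) ^ 2) := by rw [hP x, hP y, mul_pow]
    _ = ‖x‖ * ‖y‖ := Real.sqrt_sq (by positivity)

theorem pair_le_jmtQuotient (hcompat : P.IsCompatible) (hlin : P.IsPartiallyLinear) (x y : X)
    {h : ℝ} (hh : 0 < h) : P.pair x y ≤ jmtQuotient x y h := by
  have h_bound : ‖y‖ ^ 2 + h * P.pair x y ≤ ‖y + h • x‖ * ‖y‖ := by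
    calc ‖y‖ ^ 2 + h * P.pair x y = P.pair (y + h • x) y := by
          rw [hlin.pair_self_add_smul x y hh.le, hcompat y]
      _ ≤ ‖y + h • x‖ * ‖y‖ := hcompat.pair_le_norm_mul_norm _ _
  rw [jmtQuotient, ← mul_div_assoc, le_div_iff₀ hh]
  linarith

theorem jmtQuotient_le_neg_pair_neg_left (hcompat : P.IsCompatible) (hlin : P.IsPartiallyLinear)
    (x y : X) {h : ℝ} (hh : h < 0) : jmtQuotient x y h ≤ -P.pair (-x) y := by
  have h_reflected := pair_le_jmtQuotient hcompat hlin (-x) y (neg_pos.mpr hh)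
  rw [jmtQuotient_neg_neg] at h_reflected
  exact le_neg_of_le_neg h_reflected

theorem pair_le_of_tendsto_jmtQuotient (hcompat : P.IsCompatible) (hlin : P.IsPartiallyLinear)
    {x y : X} {L : ℝ} (hL : Tendsto (jmtQuotient x y) (𝓝[>] 0) (𝓝 L)) : P.pair x y ≤ L :=
  ge_of_tendsto hL <| eventually_mem_nhdsWithin.mono fun _ hh ↦
    pair_le_jmtQuotient hcompat hlin x y hh

theorem le_neg_pair_neg_left_of_tendsto_jmtQuotient (hcompat : P.IsCompatible)
    (hlin : P.IsPartiallyLinear) {x y : X} {L : ℝ}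
    (hL : Tendsto (jmtQuotient x y) (𝓝[<] 0) (𝓝 L)) : L ≤ -P.pair (-x) y :=
  le_of_tendsto hL <| eventually_mem_nhdsWithin.mono fun _ hh ↦
    jmtQuotient_le_neg_pair_neg_left hcompat hlin x y hh

end Normed

end WeakPairing

/-- a partially linear weak pairing compatible with the norm is
sandwiched between the lower and upper JMT pairings of the norm. -/
theorem partial_linearity_implies_JMT_domination
    (X : Type*) [NormedAddCommGroup X] [NormedSpace ℝ X]
    (P : WeakPairing X) (hcompat : ∀ x : X, P.pair x x = ‖x‖ ^ 2)
    (hlin : ∀ (x y : X) (a : ℝ), P.pair (x + a • y) y = P.pair x y + a * ‖y‖ ^ 2)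
    (Jp Jm : X → X → ℝ)
    (hJp : ∀ x y : X, Tendsto (fun h : ℝ => ‖y‖ * ((‖y + h • x‖ - ‖y‖) / h))
      (𝓝[>] (0:ℝ)) (𝓝 (Jp x y)))
    (hJm : ∀ x y : X, Tendsto (fun h : ℝ => ‖y‖ * ((‖y + h • x‖ - ‖y‖) / h))
      (𝓝[<] (0:ℝ)) (𝓝 (Jm x y))) :
    ∀ x y : X, Jm x y ≤ -P.pair (-x) y ∧ -P.pair (-x) y ≤ P.pair x y ∧
      P.pair x y ≤ Jp x y := by
  have h_lin : P.IsPartiallyLinear := fun x y a ↦ by rw [hlin, hcompat]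
  exact fun x y ↦
    ⟨WeakPairing.le_neg_pair_neg_left_of_tendsto_jmtQuotient hcompat h_lin (hJm x y),
      P.neg_pair_neg_left_le x y,
      WeakPairing.pair_le_of_tendsto_jmtQuotient hcompat h_lin (hJp x y)⟩
end

section
/- Let (X,‖·‖) be a real normed space and ⟦·,·⟧ a weak pairing on X compatible with the norm satisfying ⟦x,y⟧ ≤ ⟦x,y⟧₊ for all x,y ∈ X, where ⟦·,·⟧₊ is the upper JMT pairing of the norm. Let A : X → X be a bounded linear operator and μ(A) a real number such that (‖Id+hA‖−1)/h → μ(A) as h → 0⁺ (operator norm). Then ⟦Ax,x⟧ ≤ μ(A) for every x ∈ X with ‖x‖ = 1. -/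
open Filter Topology MeasureTheory

/-! The slopes `(‖x + h • A x‖ - ‖x‖) / h` are at most `‖x‖ * ((‖Id + h • A‖ - 1) / h)`, since
`x + h • A x = (Id + h • A) x`. Letting `h → 0⁺` bounds `⟦A x, x⟧₊` by `μ(A) * ‖x‖ ^ 2`. -/

section UpperJMTPairing

variable {E : Type*} [SeminormedAddCommGroup E] [NormedSpace ℝ E]

lemma convexOn_norm_add_smul (x y : E) :
    ConvexOn ℝ Set.univ (fun h : ℝ => ‖y + h • x‖) := by
  simpa [Function.comp_def, AffineMap.lineMap_apply, add_comm] using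
    (convexOn_univ_norm (E := E)).comp_affineMap (AffineMap.lineMap y (y + x))

/-- The upper JMT pairing `⟦x, y⟧₊` of the norm: the norm of `y` times the right derivative at `0`
of `h ↦ ‖y + h • x‖`. By convexity this derivative exists, so `derivWithin` takes no junk value. -/
noncomputable def upperJMTPairing (x y : E) : ℝ :=
  ‖y‖ * derivWithin (fun h : ℝ => ‖y + h • x‖) (Set.Ioi 0) 0

lemma tendsto_norm_add_smul_slope (x y : E) :
    Tendsto (fun h : ℝ => (‖y + h • x‖ - ‖y‖) / h) (𝓝[>] 0)
      (𝓝 (derivWithin (fun h : ℝ => ‖y + h • x‖) (Set.Ioi 0) 0)) := by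
  have hderiv := (convexOn_norm_add_smul x y).hasDerivWithinAt_rightDeriv_of_mem_interior
    (x := 0) (by simp only [interior_univ, Set.mem_univ])
  rw [hasDerivWithinAt_iff_tendsto_slope' Set.self_notMem_Ioi] at hderiv
  simpa [slope_fun_def_field] using hderiv

lemma norm_add_smul_apply_slope_le (A : E →L[ℝ] E) (x : E) {h : ℝ} (hh : 0 < h) :
    (‖x + h • A x‖ - ‖x‖) / h ≤
      ‖x‖ * ((‖ContinuousLinearMap.id ℝ E + h • A‖ - 1) / h) := by
  have hop : ‖x + h • A x‖ ≤ ‖ContinuousLinearMap.id ℝ E + h • A‖ * ‖x‖ :=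
    (ContinuousLinearMap.id ℝ E + h • A).le_opNorm x
  calc (‖x + h • A x‖ - ‖x‖) / h
      ≤ (‖ContinuousLinearMap.id ℝ E + h • A‖ * ‖x‖ - ‖x‖) / h := by gcongr
    _ = ‖x‖ * ((‖ContinuousLinearMap.id ℝ E + h • A‖ - 1) / h) := by ring

theorem upperJMTPairing_apply_self_le {A : E →L[ℝ] E} {μ : ℝ}
    (hμ : Tendsto (fun h : ℝ => (‖ContinuousLinearMap.id ℝ E + h • A‖ - 1) / h)
      (𝓝[>] 0) (𝓝 μ)) (x : E) :
    upperJMTPairing (A x) x ≤ μ * ‖x‖ ^ 2 := by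
  have hderiv : derivWithin (fun h : ℝ => ‖x + h • A x‖) (Set.Ioi 0) 0 ≤ ‖x‖ * μ :=
    le_of_tendsto_of_tendsto (tendsto_norm_add_smul_slope (A x) x) (hμ.const_mul ‖x‖)
      (eventually_mem_nhdsWithin.mono fun _ hh => norm_add_smul_apply_slope_le A x hh)
  calc upperJMTPairing (A x) x
      ≤ ‖x‖ * (‖x‖ * μ) := mul_le_mul_of_nonneg_left hderiv (norm_nonneg x)
    _ = μ * ‖x‖ ^ 2 := by ring

theorem JMT_domination_implies_one_sided_lumer_general {p : E → E → ℝ}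
    (hdom : ∀ (x y : E) (L : ℝ),
      Tendsto (fun h : ℝ => (‖y + h • x‖ - ‖y‖) / h) (𝓝[>] 0) (𝓝 L) → p x y ≤ ‖y‖ * L)
    {A : E →L[ℝ] E} {μ : ℝ}
    (hμ : Tendsto (fun h : ℝ => (‖ContinuousLinearMap.id ℝ E + h • A‖ - 1) / h)
      (𝓝[>] 0) (𝓝 μ)) (x : E) :
    p (A x) x ≤ μ * ‖x‖ ^ 2 :=
  calc p (A x) x
      ≤ upperJMTPairing (A x) x := hdom (A x) x _ (tendsto_norm_add_smul_slope (A x) x)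
    _ ≤ μ * ‖x‖ ^ 2 := upperJMTPairing_apply_self_le hμ x

end UpperJMTPairing

/-- a weak pairing dominated by the upper JMT pairing satisfies
the one-sided Lumer inequality `⟦Ax,x⟧ ≤ μ(A)` for unit vectors `x`. -/
theorem JMT_domination_implies_one_sided_lumer
    (X : Type*) [NormedAddCommGroup X] [NormedSpace ℝ X]
    (P : WeakPairing X) (hcompat : ∀ x : X, P.pair x x = ‖x‖ ^ 2)
    (hdom : ∀ (x y : X) (L : ℝ),
      Tendsto (fun h : ℝ => (‖y + h • x‖ - ‖y‖) / h) (𝓝[>] (0:ℝ)) (𝓝 L) →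
      P.pair x y ≤ ‖y‖ * L)
    (A : X →L[ℝ] X) (μ : ℝ)
    (hμ : Tendsto (fun h : ℝ => (‖ContinuousLinearMap.id ℝ X + h • A‖ - 1) / h)
      (𝓝[>] (0:ℝ)) (𝓝 μ)) :
    ∀ x : X, ‖x‖ = 1 → P.pair (A x) x ≤ μ := by
  intro x hx
  simpa [hx] using JMT_domination_implies_one_sided_lumer_general hdom hμ x
end

section
/- Let (X,‖·‖) be a real normed space and ⟦·,·⟧ a weak pairing on X compatible with the norm. Suppose that for every bounded linear operator A : X → X and every real number μ(A) with (‖Id+hA‖−1)/h → μ(A) as h → 0⁺ (operator norm), one has ⟦Ax,x⟧ ≤ μ(A) for all x ∈ X with ‖x‖ = 1. Then ⟦·,·⟧ satisfies the straight angle property: ⟦−x,x⟧ = −‖x‖² for all x ∈ X. -/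
open Filter Topology MeasureTheory

/-! Subadditivity gives `0 = ⟦0, x⟧ ≤ ⟦x, x⟧ + ⟦-x, x⟧`, so `-‖x‖² ≤ ⟦-x, x⟧` always holds. The
reverse inequality is the Lumer inequality for `-Id`, whose logarithmic norm is `-1`, extended from
the unit sphere by homogeneity. -/

section LogNorm

variable {𝔸 : Type*} [SeminormedRing 𝔸] [NormedAlgebra ℝ 𝔸]

/-- The logarithmic norm of `a` is `μ`, stated as existence of the defining one-sided limit together
with its value. For `𝔸 = X →L[ℝ] X` this is the logarithmic norm of a bounded operator. -/
def HasLogNorm (a : 𝔸) (μ : ℝ) : Prop :=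
  Tendsto (fun h : ℝ => (‖1 + h • a‖ - 1) / h) (𝓝[>] (0 : ℝ)) (𝓝 μ)

theorem hasLogNorm_algebraMap [NormOneClass 𝔸] (c : ℝ) : HasLogNorm (algebraMap ℝ 𝔸 c) c := by
  have norm_eq (h : ℝ) : ‖1 + h • algebraMap ℝ 𝔸 c‖ = |1 + h * c| := by
    rw [← Real.norm_eq_abs, ← norm_algebraMap' 𝔸, map_add, map_one, map_mul, Algebra.smul_def]
  have eventually_pos : ∀ᶠ h : ℝ in 𝓝[>] 0, 0 < 1 + h * c := by
    have tendsto_one : Tendsto (fun h : ℝ => 1 + h * c) (𝓝 0) (𝓝 1) :=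
      Continuous.tendsto' (by fun_prop) 0 1 (by simp)
    exact nhdsWithin_le_nhds (tendsto_one.eventually_const_lt one_pos)
  refine tendsto_const_nhds.congr' ?_
  filter_upwards [eventually_pos, self_mem_nhdsWithin] with h hpos hh
  rw [norm_eq, abs_of_pos hpos, add_sub_cancel_left, mul_div_cancel_left₀ c (ne_of_gt hh)]

end LogNorm

namespace WeakPairing

section Module

variable {X : Type*} [AddCommGroup X] [Module ℝ X] (P : WeakPairing X)

theorem neg_pair_le_pair_neg (x y : X) : -P.pair x y ≤ P.pair (-x) y := by
  have zero_le_add : 0 ≤ P.pair x y + P.pair (-x) y := by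
    simpa [P.pair_zero_left] using P.subadd x (-x) y
  linarith

theorem pair_smul_smul (r : ℝ) (x y : X) : P.pair (r • x) (r • y) = r ^ 2 * P.pair x y := by
  have of_nonneg {s : ℝ} (hs : 0 ≤ s) : P.pair (s • x) (s • y) = s ^ 2 * P.pair x y := by
    rw [P.smul_left s hs, P.smul_right s hs, ← mul_assoc, sq]
  rcases le_total 0 r with hr | hr
  · exact of_nonneg hr
  · rw [← P.neg_neg_eq, ← neg_smul, ← neg_smul, of_nonneg (neg_nonneg.mpr hr), neg_sq]

end Module

variable {X : Type*} [NormedAddCommGroup X] [NormedSpace ℝ X] (P : WeakPairing X)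

theorem pair_map_self_le_of_unit (A : X →ₗ[ℝ] X) {c : ℝ}
    (hunit : ∀ u : X, ‖u‖ = 1 → P.pair (A u) u ≤ c) (x : X) :
    P.pair (A x) x ≤ c * ‖x‖ ^ 2 := by
  rcases eq_or_ne x 0 with rfl | hx
  · simp [P.pair_zero_left]
  obtain ⟨u, hu, hxu⟩ : ∃ u : X, ‖u‖ = 1 ∧ x = ‖x‖ • u :=
    ⟨‖x‖⁻¹ • x, norm_smul_inv_norm hx, (smul_inv_smul₀ (norm_ne_zero_iff.mpr hx) x).symm⟩
  calc
    P.pair (A x) x = P.pair (‖x‖ • A u) (‖x‖ • u) := by rw [← map_smul, ← hxu]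
    _ = ‖x‖ ^ 2 * P.pair (A u) u := P.pair_smul_smul ..
    _ ≤ ‖x‖ ^ 2 * c := by gcongr; exact hunit u hu
    _ = c * ‖x‖ ^ 2 := mul_comm ..

end WeakPairing

theorem one_sided_lumer_implies_straight_angle_general
    {X : Type*} [NormedAddCommGroup X] [NormedSpace ℝ X]
    (P : WeakPairing X) (hcompat : ∀ x : X, P.pair x x = ‖x‖ ^ 2)
    (hlumer : ∀ μ : ℝ, HasLogNorm (-1 : X →L[ℝ] X) μ →
      ∀ x : X, ‖x‖ = 1 → P.pair (-x) x ≤ μ) (x : X) :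
    P.pair (-x) x = -‖x‖ ^ 2 := by
  have pair_neg_unit_le (u : X) (hu : ‖u‖ = 1) : P.pair (-u) u ≤ -1 := by
    have : Nontrivial X := ⟨u, 0, by rintro rfl; simp at hu⟩
    have logNorm_neg_one : HasLogNorm (-1 : X →L[ℝ] X) (-1) := by
      simpa using hasLogNorm_algebraMap (𝔸 := X →L[ℝ] X) (-1)
    exact hlumer (-1) logNorm_neg_one u hu
  apply le_antisymm
  · simpa using P.pair_map_self_le_of_unit (-LinearMap.id) pair_neg_unit_le x
  · simpa [hcompat] using P.neg_pair_le_pair_neg x x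

/-- if the one-sided Lumer inequality holds for all bounded
operators, then the weak pairing satisfies the straight angle property. -/
theorem one_sided_lumer_implies_straight_angle
    (X : Type*) [NormedAddCommGroup X] [NormedSpace ℝ X]
    (P : WeakPairing X) (hcompat : ∀ x : X, P.pair x x = ‖x‖ ^ 2)
    (hlumer : ∀ (A : X →L[ℝ] X) (μ : ℝ),
      Tendsto (fun h : ℝ => (‖ContinuousLinearMap.id ℝ X + h • A‖ - 1) / h)
        (𝓝[>] (0:ℝ)) (𝓝 μ) →
      ∀ x : X, ‖x‖ = 1 → P.pair (A x) x ≤ μ) :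
    ∀ x : X, P.pair (-x) x = -‖x‖ ^ 2 :=
  one_sided_lumer_implies_straight_angle_general P hcompat (hlumer (-1))
end

section
/- Let (X,‖·‖) be a real normed space and ⟦·,·⟧ a weak pairing on X compatible with the norm satisfying ⟦x,y⟧ ≤ ⟦x,y⟧₊ for all x,y ∈ X, where ⟦·,·⟧₊ is the upper JMT pairing of the norm. Then the curve norm derivative formula holds: for every curve x : (a,b) → X differentiable at every point and every t ∈ (a,b) at which the function f(s) := ‖x(s)‖ is differentiable, one has f(t)·f′(t) = ⟦x′(t), x(t)⟧. -/
open Filter Topology MeasureTheory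

/-! The norm is Lipschitz, so it cannot distinguish a curve from its tangent line to first order:
where `s ↦ ‖x s‖` has derivative `d` along a curve with velocity `v`, the norm has the two-sided
directional derivative `d` at `x t` along `v`. Its right derivatives along `v` and `-v` are
therefore `d` and `-d`, so domination bounds the pairings of `v` and of `-v` with `x t` above by
`‖x t‖ * d` and `-(‖x t‖ * d)`; subadditivity turns the second bound into the reverse of the
first. -/

section Tangent

open Asymptotics

theorem isBigO_comp_sub_comp_of_lipschitzOnWith {ι E F : Type*} [SeminormedAddCommGroup E]
    [SeminormedAddCommGroup F] {f : E → F} {K : NNReal} {s : Set E} (hf : LipschitzOnWith K f s)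
    {l : Filter ι} {u v : ι → E} (hu : ∀ᶠ i in l, u i ∈ s) (hv : ∀ᶠ i in l, v i ∈ s) :
    (fun i => f (u i) - f (v i)) =O[l] fun i => u i - v i := by
  refine .of_bound K ?_
  filter_upwards [hu, hv] with i hui hvi
  exact hf.norm_sub_le hui hvi

variable {𝕜 E F G : Type*} [NontriviallyNormedField 𝕜]
  [SeminormedAddCommGroup F] [NormedAddCommGroup G] [NormedSpace 𝕜 G]
  {f : F → G} {K : NNReal} {s : Set F}

theorem hasFDerivAt_comp_of_isLittleO_sub [SeminormedAddCommGroup E] [NormedSpace 𝕜 E]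
    (hf : LipschitzOnWith K f s) {g₁ g₂ : E → F} {x : E} {L : E →L[𝕜] G}
    (hg₁ : ∀ᶠ y in 𝓝 x, g₁ y ∈ s) (hg₂ : ∀ᶠ y in 𝓝 x, g₂ y ∈ s)
    (hg : (fun y => g₂ y - g₁ y) =o[𝓝 x] fun y => y - x)
    (h : HasFDerivAt (fun y => f (g₁ y)) L x) :
    HasFDerivAt (fun y => f (g₂ y)) L x := by
  have hdiff : (fun y => f (g₂ y) - f (g₁ y)) =o[𝓝 x] fun y => y - x :=
    (isBigO_comp_sub_comp_of_lipschitzOnWith hf hg₂ hg₁).trans_isLittleO hg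
  have hx : f (g₂ x) = f (g₁ x) := by
    simpa [sub_eq_zero] using (hdiff.def zero_lt_one).self_of_nhds
  refine .of_isLittleO <| (hdiff.add h.isLittleO).congr_left fun y => ?_
  rw [hx]
  abel

theorem hasLineDerivAt_of_hasDerivAt_comp [NormedSpace 𝕜 F] (hf : LipschitzOnWith K f s)
    {γ : 𝕜 → F} {t : 𝕜} {v : F} {f' : G} (hs : s ∈ 𝓝 (γ t)) (hγ : HasDerivAt γ v t)
    (h : HasDerivAt (fun r => f (γ r)) f' t) : HasLineDerivAt 𝕜 f f' (γ t) v := by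
  let τ : 𝕜 → F := fun r => γ t + (r - t) • v
  have hτ : ContinuousAt τ t := by fun_prop
  have hτs : ∀ᶠ r in 𝓝 t, τ r ∈ s := hτ.eventually_mem (by simpa [τ] using hs)
  have hγs : ∀ᶠ r in 𝓝 t, γ r ∈ s := hγ.hasFDerivAt.continuousAt.eventually_mem hs
  have hτγ : (fun r => τ r - γ r) =o[𝓝 t] fun r => r - t :=
    hγ.hasFDerivAt.isLittleO.neg_left.congr_left fun r => by
      simp only [τ, ContinuousLinearMap.toSpanSingleton_apply]
      abel
  have hfτ : HasDerivAt (fun r => f (τ r)) f' t :=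
    hasFDerivAt_comp_of_isLittleO_sub hf hγs hτs hτγ h
  have hshift : HasDerivAt (fun r => f (τ (t + r))) f' 0 :=
    HasDerivAt.comp_const_add t 0 (by simpa using hfτ)
  simpa [HasLineDerivAt, τ] using hshift

end Tangent

theorem neg_map_neg_le_of_subadditive {E R : Type*} [AddGroup E] [AddCommGroup R] [PartialOrder R]
    [IsOrderedAddMonoid R] {p : E → R} (hp : ∀ w₁ w₂, p (w₁ + w₂) ≤ p w₁ + p w₂) (w : E) :
    -p (-w) ≤ p w := by
  have hzero : 0 ≤ p 0 := by simpa using hp 0 0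
  rw [neg_le_iff_add_nonneg]
  calc 0 ≤ p (w + -w) := by rwa [add_neg_cancel]
    _ ≤ p w + p (-w) := hp w (-w)

theorem eq_mul_of_hasLineDerivAt_of_subadditive {E : Type*} [AddCommGroup E] [Module ℝ E]
    {f p : E → ℝ} {c d : ℝ} {y v : E} (hp : ∀ w₁ w₂, p (w₁ + w₂) ≤ p w₁ + p w₂)
    (hdom : ∀ w L, HasLineDerivAt ℝ f L y w → p w ≤ c * L) (hf : HasLineDerivAt ℝ f d y v) :
    p v = c * d := by
  have hneg : HasLineDerivAt ℝ f (-d) y (-v) := by simpa using hf.smul (-1)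
  refine le_antisymm (hdom v d hf) ?_
  calc c * d = -(c * -d) := by ring
    _ ≤ -p (-v) := neg_le_neg (hdom (-v) (-d) hneg)
    _ ≤ p v := neg_map_neg_le_of_subadditive hp v

theorem JMT_domination_implies_curve_norm_derivative_general
    {X : Type*} [SeminormedAddCommGroup X] [NormedSpace ℝ X] {x : ℝ → X} {t d : ℝ} {v : X}
    {p : X → ℝ} (hp : ∀ w₁ w₂, p (w₁ + w₂) ≤ p w₁ + p w₂)
    (hdom : ∀ (w : X) (L : ℝ),
      Tendsto (fun h : ℝ => (‖x t + h • w‖ - ‖x t‖) / h) (𝓝[>] (0:ℝ)) (𝓝 L) →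
      p w ≤ ‖x t‖ * L)
    (hx : HasDerivAt x v t) (hnorm : HasDerivAt (fun s => ‖x s‖) d t) :
    p v = ‖x t‖ * d := by
  have hline : HasLineDerivAt ℝ norm d (x t) v :=
    hasLineDerivAt_of_hasDerivAt_comp lipschitzWith_one_norm.lipschitzOnWith univ_mem hx hnorm
  refine eq_mul_of_hasLineDerivAt_of_subadditive hp (fun w L hL => hdom w L ?_) hline
  simpa only [div_eq_inv_mul, smul_eq_mul] using hL.tendsto_slope_zero_right

/-- a weak pairing dominated by the upper JMT pairing satisfies
the curve norm derivative formula `f(t)·f′(t) = ⟦x′(t), x(t)⟧`. -/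
theorem JMT_domination_implies_curve_norm_derivative
    (X : Type*) [NormedAddCommGroup X] [NormedSpace ℝ X]
    (P : WeakPairing X) (hcompat : ∀ x : X, P.pair x x = ‖x‖ ^ 2)
    (hdom : ∀ (x y : X) (L : ℝ),
      Tendsto (fun h : ℝ => (‖y + h • x‖ - ‖y‖) / h) (𝓝[>] (0:ℝ)) (𝓝 L) →
      P.pair x y ≤ ‖y‖ * L) :
    ∀ (a b : ℝ) (x : ℝ → X), (∀ s ∈ Set.Ioo a b, DifferentiableAt ℝ x s) →
      ∀ t ∈ Set.Ioo a b, DifferentiableAt ℝ (fun s => ‖x s‖) t →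
      ‖x t‖ * deriv (fun s => ‖x s‖) t = P.pair (deriv x t) (x t) := by
  intro a b x hx t ht hnorm
  exact (JMT_domination_implies_curve_norm_derivative_general (fun w₁ w₂ => P.subadd w₁ w₂ (x t))
    (fun w L hL => hdom w (x t) L hL) (hx t ht).hasDerivAt hnorm.hasDerivAt).symm
end

section
/- Let X be a real vector space and [·,·] an LG pairing on X, with induced norm ‖x‖ := sqrt([x,x]). Then the LG pairing is sandwiched between the JMT pairings of this norm: ⟦x,y⟧₋ ≤ [x,y] ≤ ⟦x,y⟧₊ for all x,y ∈ X. -/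
open Filter Topology MeasureTheory

/-- An LG (Lumer–Giles) pairing on a real vector space `X`. -/
structure LGPairing (X : Type*) [AddCommGroup X] [Module ℝ X] where
  pair : X → X → ℝ
  add_left : ∀ x₁ x₂ y : X, pair (x₁ + x₂) y = pair x₁ y + pair x₂ y
  smul_left : ∀ (l : ℝ) (x y : X), pair (l • x) y = l * pair x y
  pos_def : ∀ x : X, x ≠ 0 → 0 < pair x x
  cauchy_schwarz : ∀ x y : X, pair x y ≤ Real.sqrt (pair x x * pair y y)
  smul_right : ∀ (l : ℝ) (x y : X), pair x (l • y) = l * pair x y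

/-!
By Cauchy–Schwarz, the linear functional `[·, y]` is dominated by `‖y‖ ‖·‖`, with equality at `y`.
So it is a subgradient of `‖y‖ ‖·‖` at `y`, and the value of a subgradient in a direction `x` lies
between the left and the right derivative in that direction.
-/

section Subgradient

variable {𝕜 X : Type*} [Field 𝕜] [LinearOrder 𝕜] [AddCommGroup X] [Module 𝕜 X]

/-- The linear functional `f` is a subgradient of `φ` at `y`: the affine function with linear part
`f` that agrees with `φ` at `y` is a global minorant of `φ`. Here `f`
ranges over the algebraic dual. -/
def IsSubgradientAt (f : Module.Dual 𝕜 X) (φ : X → 𝕜) (y : X) : Prop :=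
  ∀ z, f (z - y) ≤ φ z - φ y

variable {f : Module.Dual 𝕜 X} {φ : X → 𝕜} {x y : X} {d : 𝕜}

theorem isSubgradientAt_of_le_of_eq [IsOrderedAddMonoid 𝕜] (hle : ∀ z, f z ≤ φ z)
    (heq : f y = φ y) : IsSubgradientAt f φ y := fun z => by
  rw [map_sub, heq]
  exact sub_le_sub_right (hle z) _

namespace IsSubgradientAt

theorem mul_apply_le (hf : IsSubgradientAt f φ y) (x : X) (h : 𝕜) :
    h * f x ≤ φ (y + h • x) - φ y := by
  simpa only [add_sub_cancel_left, map_smul, smul_eq_mul] using hf (y + h • x)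

variable [IsStrictOrderedRing 𝕜] [TopologicalSpace 𝕜] [OrderTopology 𝕜]

theorem apply_le_of_tendsto_right (hf : IsSubgradientAt f φ y)
    (hd : Tendsto (fun h : 𝕜 => (φ (y + h • x) - φ y) / h) (𝓝[>] 0) (𝓝 d)) : f x ≤ d := by
  refine ge_of_tendsto hd ?_
  filter_upwards [self_mem_nhdsWithin] with h hpos
  rw [le_div_iff₀' hpos]
  exact hf.mul_apply_le x h

theorem le_apply_of_tendsto_left (hf : IsSubgradientAt f φ y)
    (hd : Tendsto (fun h : 𝕜 => (φ (y + h • x) - φ y) / h) (𝓝[<] 0) (𝓝 d)) : d ≤ f x := by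
  refine le_of_tendsto hd ?_
  filter_upwards [self_mem_nhdsWithin] with h hneg
  rw [div_le_iff_of_neg' hneg]
  exact hf.mul_apply_le x h

end IsSubgradientAt

end Subgradient

section Pairing

variable {X : Type*} [AddCommGroup X] [Module ℝ X]

theorem isSubgradientAt_sqrt_mul_sqrt {B : X → Module.Dual ℝ X} (hB : ∀ z, 0 ≤ B z z)
    (hcs : ∀ x y, B y x ≤ √(B x x * B y y)) (y : X) :
    IsSubgradientAt (B y) (fun z => √(B y y) * √(B z z)) y := by
  refine isSubgradientAt_of_le_of_eq (fun z => ?_) (Real.mul_self_sqrt (hB y)).symm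
  rw [← Real.sqrt_mul (hB y), mul_comm]
  exact hcs z y

/-- `B y x` stands for `[x, y]`. -/
theorem LG_pairing_between_JMT_pairings_general {B : X → Module.Dual ℝ X}
    (hB : ∀ z, 0 ≤ B z z) (hcs : ∀ x y, B y x ≤ √(B x x * B y y))
    {N : X → ℝ} (hN : ∀ z, N z = √(B z z)) {x y : X} {jp jm : ℝ}
    (hjp : Tendsto (fun h : ℝ => N y * ((N (y + h • x) - N y) / h)) (𝓝[>] 0) (𝓝 jp))
    (hjm : Tendsto (fun h : ℝ => N y * ((N (y + h • x) - N y) / h)) (𝓝[<] 0) (𝓝 jm)) :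
    jm ≤ B y x ∧ B y x ≤ jp := by
  have hsub : IsSubgradientAt (B y) (fun z => N y * N z) y := by
    simpa only [hN] using isSubgradientAt_sqrt_mul_sqrt hB hcs y
  simp only [← mul_div_assoc, mul_sub] at hjp hjm
  exact ⟨hsub.le_apply_of_tendsto_left hjm, hsub.apply_le_of_tendsto_right hjp⟩

namespace LGPairing

/-- The functional `[·, y]` as an element of the algebraic dual; `y` comes first, so that
`L.toDual y x = [x, y]`. -/
def toDual (L : LGPairing X) (y : X) : Module.Dual ℝ X where
  toFun x := L.pair x y
  map_add' x₁ x₂ := L.add_left x₁ x₂ y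
  map_smul' l x := L.smul_left l x y

theorem pair_self_nonneg (L : LGPairing X) (x : X) : 0 ≤ L.pair x x := by
  rcases eq_or_ne x 0 with rfl | hx
  · exact (map_zero (L.toDual 0)).ge
  · exact (L.pos_def x hx).le

end LGPairing

end Pairing

/-- an LG pairing is sandwiched between the lower and upper JMT
pairings of its induced norm. -/
theorem LG_pairing_between_JMT_pairings
    (X : Type*) [AddCommGroup X] [Module ℝ X] (L : LGPairing X)
    (N : X → ℝ) (hN : ∀ z : X, N z = Real.sqrt (L.pair z z))
    (Jp Jm : X → X → ℝ)
    (hJp : ∀ x y : X, Tendsto (fun h : ℝ => N y * ((N (y + h • x) - N y) / h))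
      (𝓝[>] (0:ℝ)) (𝓝 (Jp x y)))
    (hJm : ∀ x y : X, Tendsto (fun h : ℝ => N y * ((N (y + h • x) - N y) / h))
      (𝓝[<] (0:ℝ)) (𝓝 (Jm x y))) :
    ∀ x y : X, Jm x y ≤ L.pair x y ∧ L.pair x y ≤ Jp x y := by
  intro x y
  exact LG_pairing_between_JMT_pairings_general (B := L.toDual) L.pair_self_nonneg
    L.cauchy_schwarz hN (hJp x y) (hJm x y)
end

section
/- Let X be a real vector space, [·,·] an LG pairing on X with induced norm ‖x‖ := sqrt([x,x]), and x₀, v ∈ X. Then the following are equivalent: (i) the function t ↦ ‖x₀+tv‖ is constant on ℝ; (ii) [v, x₀+tv] = 0 for almost all t ∈ ℝ (Lebesgue measure); (iii) v = 0. -/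
open Filter Topology MeasureTheory

/-!
If `v ≠ 0`, then `[x₀ + t v, v] = [x₀, v] + t [v, v]` tends to infinity with `t` and is at most
`‖x₀ + t v‖ ‖v‖`, so `t ↦ ‖x₀ + t v‖` is unbounded. On the other hand `[v, x₀ + t v] = 0` gives
`‖x₀ + t v‖² = [x₀, x₀ + t v] ≤ ‖x₀‖ ‖x₀ + t v‖`, that is `‖x₀ + t v‖ ≤ ‖x₀‖`; if this holds for
almost every `t`, it holds for arbitrarily large `t`.
-/

/-- A semi-inner product in the sense of Lumer: an LG pairing without Giles' homogeneity in the
second argument. -/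
structure LumerPairing (X : Type*) [AddCommGroup X] [Module ℝ X] where
  pair : X → X → ℝ
  add_left : ∀ x₁ x₂ y : X, pair (x₁ + x₂) y = pair x₁ y + pair x₂ y
  smul_left : ∀ (l : ℝ) (x y : X), pair (l • x) y = l * pair x y
  pos_def : ∀ x : X, x ≠ 0 → 0 < pair x x
  cauchy_schwarz : ∀ x y : X, pair x y ≤ Real.sqrt (pair x x * pair y y)

/-- The Lumer pairing underlying an LG pairing. -/
def LGPairing.toLumerPairing {X : Type*} [AddCommGroup X] [Module ℝ X] (L : LGPairing X) :
    LumerPairing X :=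
  { L with }

namespace LumerPairing

variable {X : Type*} [AddCommGroup X] [Module ℝ X] (S : LumerPairing X)

/-- The norm `‖x‖ = √[x, x]` induced by a Lumer pairing. -/
noncomputable def norm (x : X) : ℝ :=
  √(S.pair x x)

theorem pair_zero_left (y : X) : S.pair 0 y = 0 := by
  simpa only [zero_smul, zero_mul] using S.smul_left 0 0 y

theorem pair_self_nonneg (x : X) : 0 ≤ S.pair x x := by
  obtain rfl | hx := eq_or_ne x 0
  · exact (S.pair_zero_left 0).ge
  · exact (S.pos_def x hx).le

theorem norm_nonneg (x : X) : 0 ≤ S.norm x :=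
  Real.sqrt_nonneg _

theorem norm_pos {x : X} (hx : x ≠ 0) : 0 < S.norm x :=
  Real.sqrt_pos.2 (S.pos_def x hx)

theorem norm_mul_self (x : X) : S.norm x * S.norm x = S.pair x x :=
  Real.mul_self_sqrt (S.pair_self_nonneg x)

theorem pair_le_norm_mul_norm (x y : X) : S.pair x y ≤ S.norm x * S.norm y :=
  (S.cauchy_schwarz x y).trans_eq (Real.sqrt_mul (S.pair_self_nonneg x) _)

theorem pair_add_smul_left (x v y : X) (t : ℝ) :
    S.pair (x + t • v) y = S.pair x y + t * S.pair v y := by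
  rw [S.add_left, S.smul_left]

theorem tendsto_norm_add_smul_atTop (x : X) {v : X} (hv : v ≠ 0) :
    Tendsto (fun t : ℝ => S.norm (x + t • v)) atTop atTop := by
  have pair_tendsto : Tendsto (fun t : ℝ => S.pair (x + t • v) v) atTop atTop := by
    simp only [S.pair_add_smul_left]
    exact tendsto_atTop_add_const_left _ _ (tendsto_id.atTop_mul_const (S.pos_def v hv))
  rw [← tendsto_mul_const_atTop_of_pos (S.norm_pos hv)]
  exact tendsto_atTop_mono (fun t => S.pair_le_norm_mul_norm _ _) pair_tendsto

theorem eq_zero_of_frequently_norm_add_smul_le {x v : X} {c : ℝ}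
    (h : ∃ᶠ t : ℝ in atTop, S.norm (x + t • v) ≤ c) : v = 0 := by
  by_contra hv
  exact h (((S.tendsto_norm_add_smul_atTop x hv).eventually_gt_atTop c).mono fun _ => not_le_of_gt)

theorem norm_add_smul_le_of_pair_eq_zero {x v : X} {t : ℝ}
    (h : S.pair v (x + t • v) = 0) : S.norm (x + t • v) ≤ S.norm x := by
  set y := x + t • v with hy
  have pair_self_eq : S.pair y y = S.pair x y := by
    conv_lhs => rw [hy, S.pair_add_smul_left, ← hy, h, mul_zero, add_zero]
  have mul_self_le : S.norm y * S.norm y ≤ S.norm x * S.norm y := by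
    rw [S.norm_mul_self, pair_self_eq]
    exact S.pair_le_norm_mul_norm x y
  obtain y_norm_eq | y_norm_pos := (S.norm_nonneg y).eq_or_lt
  · exact y_norm_eq.ge.trans (S.norm_nonneg x)
  · exact le_of_mul_le_mul_right mul_self_le y_norm_pos

theorem eq_zero_of_frequently_pair_add_smul_eq_zero {x v : X}
    (h : ∃ᶠ t : ℝ in atTop, S.pair v (x + t • v) = 0) : v = 0 :=
  S.eq_zero_of_frequently_norm_add_smul_le (h.mono fun _ => S.norm_add_smul_le_of_pair_eq_zero)

end LumerPairing

theorem frequently_atTop_of_ae {α : Type*} [TopologicalSpace α] [LinearOrder α] [OrderTopology α]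
    [Nonempty α] [NoMaxOrder α] [MeasurableSpace α] {μ : Measure α} [μ.IsOpenPosMeasure]
    {p : α → Prop} (h : ∀ᵐ t ∂μ, p t) : ∃ᶠ t in atTop, p t :=
  frequently_atTop'.2 fun a =>
    let ⟨t, ht, hat⟩ := (Measure.dense_of_ae h).exists_gt a
    ⟨t, hat, ht⟩

theorem LG_orthogonality_characterization_general
    {X : Type*} [AddCommGroup X] [Module ℝ X] (S : LumerPairing X) (x₀ v : X) :
    ((∀ t : ℝ, S.norm (x₀ + t • v) = S.norm x₀) ↔ v = 0) ∧
    ((∀ᵐ t ∂(volume : Measure ℝ), S.pair v (x₀ + t • v) = 0) ↔ v = 0) := by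
  refine ⟨⟨fun norm_const => ?_, ?_⟩, ⟨fun pair_eq_zero => ?_, ?_⟩⟩
  · exact S.eq_zero_of_frequently_norm_add_smul_le
      (Frequently.of_forall fun t => (norm_const t).le)
  · rintro rfl t
    rw [smul_zero, add_zero]
  · exact S.eq_zero_of_frequently_pair_add_smul_eq_zero (frequently_atTop_of_ae pair_eq_zero)
  · rintro rfl
    exact ae_of_all _ fun t => S.pair_zero_left _

/-- orthogonality characterization via LG pairings: the norm
`t ↦ ‖x₀ + t v‖` is constant iff `[v, x₀+tv] = 0` for a.e. `t` iff `v = 0`. -/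
theorem LG_orthogonality_characterization
    (X : Type*) [AddCommGroup X] [Module ℝ X] (L : LGPairing X)
    (N : X → ℝ) (hN : ∀ z : X, N z = Real.sqrt (L.pair z z))
    (x₀ v : X) :
    ((∀ t : ℝ, N (x₀ + t • v) = N x₀) ↔ v = 0) ∧
    ((∀ᵐ t ∂(volume : Measure ℝ), L.pair v (x₀ + t • v) = 0) ↔ v = 0) := by
  obtain rfl : N = L.toLumerPairing.norm := funext hN
  exact LG_orthogonality_characterization_general L.toLumerPairing x₀ v
end

section
/- Let (X,‖·‖) be a real normed space and ⟦·,·⟧ a weak pairing on X compatible with the norm satisfying the straight angle property ⟦−x,x⟧ = −‖x‖² for all x. If in addition ⟦−x,y⟧ = −⟦x,y⟧ for all x,y ∈ X, then ⟦·,·⟧ is linear in its first argument: ⟦x₁+x₂,y⟧ = ⟦x₁,y⟧ + ⟦x₂,y⟧ and ⟦λx,y⟧ = λ⟦x,y⟧ for all x₁,x₂,x,y ∈ X and λ ∈ ℝ; hence ⟦·,·⟧ is an LG pairing on X. -/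
open Filter Topology MeasureTheory

theorem map_add_of_odd_of_map_add_le_add {G H : Type*} [AddGroup G] [AddCommGroup H]
    [PartialOrder H] [IsOrderedAddMonoid H] {f : G → H} (odd : Function.Odd f)
    (map_add_le : ∀ x y, f (x + y) ≤ f x + f y) (x y : G) : f (x + y) = f x + f y := by
  have neg_map_add_le : -f (x + y) ≤ -(f x + f y) :=
    calc
      -f (x + y) = f (-y + -x) := by rw [← odd, neg_add_rev]
      _ ≤ f (-y) + f (-x) := map_add_le _ _
      _ = -(f x + f y) := by rw [odd, odd, neg_add_rev]
  exact (map_add_le x y).antisymm (neg_le_neg_iff.mp neg_map_add_le)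

theorem map_smul_of_odd_of_map_smul_of_nonneg {R M N : Type*} [Ring R] [LinearOrder R]
    [IsOrderedAddMonoid R] [AddCommGroup M] [Module R M] [AddCommGroup N] [Module R N]
    {f : M → N} (odd : Function.Odd f) (map_smul : ∀ c : R, 0 ≤ c → ∀ x, f (c • x) = c • f x)
    (c : R) (x : M) : f (c • x) = c • f x := by
  rcases le_total 0 c with hc | hc
  · exact map_smul c hc x
  · calc
      f (c • x) = -f (-c • x) := by rw [neg_smul, odd, neg_neg]
      _ = -(-c • f x) := by rw [map_smul (-c) (neg_nonneg.mpr hc)]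
      _ = c • f x := by rw [neg_smul, neg_neg]

namespace WeakPairing

theorem odd_right_of_odd_left {X : Type*} [AddCommGroup X] [Module ℝ X] (P : WeakPairing X)
    (odd_left : ∀ y, Function.Odd (P.pair · y)) (x : X) : Function.Odd (P.pair x) := fun y =>
  calc
    P.pair x (-y) = P.pair (-x) y := by rw [← P.neg_neg_eq, neg_neg]
    _ = -P.pair x y := odd_left y x

end WeakPairing

theorem regular_odd_pairing_is_LG_general {X : Type*} [AddCommGroup X] [Module ℝ X]
    (P : WeakPairing X) (hodd : ∀ x y : X, P.pair (-x) y = -P.pair x y) :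
    (∀ x₁ x₂ y : X, P.pair (x₁ + x₂) y = P.pair x₁ y + P.pair x₂ y) ∧
    (∀ (l : ℝ) (x y : X), P.pair (l • x) y = l * P.pair x y) ∧
    (∀ (l : ℝ) (x y : X), P.pair x (l • y) = l * P.pair x y) := by
  have odd_left (y : X) : Function.Odd (P.pair · y) := fun x => hodd x y
  have odd_right (x : X) : Function.Odd (P.pair x) := P.odd_right_of_odd_left odd_left x
  refine ⟨fun x₁ x₂ y => ?_, fun l x y => ?_, fun l x y => ?_⟩
  · exact map_add_of_odd_of_map_add_le_add (odd_left y) (P.subadd · · y) x₁ x₂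
  · exact map_smul_of_odd_of_map_smul_of_nonneg (odd_left y) (P.smul_left · · · y) l x
  · exact map_smul_of_odd_of_map_smul_of_nonneg (odd_right x) (P.smul_right · · x) l y

/-- a regular pairing (straight angle property) that is odd in
its first argument is linear in its first argument and homogeneous in its
second argument, i.e. it is an LG pairing. -/
theorem regular_odd_pairing_is_LG
    (X : Type*) [NormedAddCommGroup X] [NormedSpace ℝ X]
    (P : WeakPairing X) (hcompat : ∀ x : X, P.pair x x = ‖x‖ ^ 2)
    (hstraight : ∀ x : X, P.pair (-x) x = -‖x‖ ^ 2)
    (hodd : ∀ x y : X, P.pair (-x) y = -P.pair x y) :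
    (∀ x₁ x₂ y : X, P.pair (x₁ + x₂) y = P.pair x₁ y + P.pair x₂ y) ∧
    (∀ (l : ℝ) (x y : X), P.pair (l • x) y = l * P.pair x y) ∧
    (∀ (l : ℝ) (x y : X), P.pair x (l • y) = l * P.pair x y) :=
  regular_odd_pairing_is_LG_general P hodd
end

section
/- Let ‖·‖ be an arbitrary norm on ℝⁿ and ⟦·,·⟧ a weak pairing on ℝⁿ compatible with this norm and satisfying the straight angle property ⟦−x,x⟧ = −‖x‖² for all x. Then for Lebesgue-almost every y ∈ ℝⁿ, one has ⟦x,y⟧₊ = ⟦x,y⟧₋ = ⟦x,y⟧ for all x ∈ ℝⁿ, where ⟦·,·⟧₊ and ⟦·,·⟧₋ are the upper and lower JMT pairings of ‖·‖. -/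
open Filter Topology MeasureTheory

/-!
Subadditivity applied to `h • x = (y + h • x) + (-y)`, together with the straight angle property and
Cauchy–Schwarz, bounds `h * ⟦x, y⟧` by `‖y‖ * (‖y + h • x‖ - ‖y‖)` for `h > 0`; hence `⟦x, y⟧` is
at most the upper JMT pairing. Replacing `x` by `-x` shows that it is at least the lower one. The
two JMT pairings agree wherever the norm is differentiable, which is almost everywhere by
Rademacher's theorem.
-/

namespace WeakPairing

section Module

variable {X : Type*} [AddCommGroup X] [Module ℝ X] (P : WeakPairing X)

/-- A weak pairing is regular with respect to `p` if it is compatible with `p` and has the straight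
angle property. The norm is encoded as a seminorm, since `pos_def` and `compatible` make `p`
definite. -/
structure IsRegular (p : Seminorm ℝ X) : Prop where
  compatible : ∀ x, P.pair x x = p x ^ 2
  straight_angle : ∀ x, P.pair (-x) x = -p x ^ 2

namespace IsRegular

variable {P} {p : Seminorm ℝ X} (hP : P.IsRegular p)
include hP

theorem pair_le_mul (x y : X) : P.pair x y ≤ p x * p y :=
  calc
    P.pair x y ≤ √(P.pair x x * P.pair y y) := P.cauchy_schwarz x y
    _ = √((p x * p y) ^ 2) := by rw [hP.compatible, hP.compatible, mul_pow]
    _ = p x * p y := Real.sqrt_sq (mul_nonneg (apply_nonneg p x) (apply_nonneg p y))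

theorem pair_le_mul_sub (x y : X) : P.pair x y ≤ p y * (p (y + x) - p y) :=
  calc
    P.pair x y = P.pair ((y + x) + -y) y := by rw [add_neg_cancel_comm]
    _ ≤ P.pair (y + x) y + P.pair (-y) y := P.subadd _ _ _
    _ ≤ p (y + x) * p y + -p y ^ 2 :=
      add_le_add (hP.pair_le_mul _ _) (hP.straight_angle y).le
    _ = p y * (p (y + x) - p y) := by ring

theorem pair_le_mul_slope {h : ℝ} (hh : 0 < h) (x y : X) :
    P.pair x y ≤ p y * (h⁻¹ • (p (y + h • x) - p y)) := by
  have hle : h * P.pair x y ≤ p y * (p (y + h • x) - p y) := by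
    rw [← P.smul_left h hh.le]
    exact hP.pair_le_mul_sub (h • x) y
  rwa [smul_eq_mul, mul_left_comm, le_inv_mul_iff₀ hh]

theorem pair_le_of_hasLineDerivAt {x y : X} {L : ℝ} (hL : HasLineDerivAt ℝ p L y x) :
    P.pair x y ≤ p y * L := by
  refine ge_of_tendsto (hL.tendsto_slope_zero_right.const_mul (p y)) ?_
  filter_upwards [self_mem_nhdsWithin] with h hh
  exact hP.pair_le_mul_slope hh x y

theorem pair_eq_of_hasLineDerivAt {x y : X} {L : ℝ} (hL : HasLineDerivAt ℝ p L y x) :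
    P.pair x y = p y * L := by
  refine (hP.pair_le_of_hasLineDerivAt hL).antisymm ?_
  have hL_neg : HasLineDerivAt ℝ p (-L) y (-x) := by simpa using hL.smul (-1)
  calc
    p y * L = -(p y * -L) := by ring
    _ ≤ -P.pair (-x) y := neg_le_neg (hP.pair_le_of_hasLineDerivAt hL_neg)
    _ ≤ P.pair x y := P.neg_pair_neg_left_le x y

end IsRegular

end Module

end WeakPairing

theorem exists_lipschitzWith_of_continuous_seminorm {𝕜 E : Type*} [NontriviallyNormedField 𝕜]
    [SeminormedAddCommGroup E] [NormedSpace 𝕜 E] (p : Seminorm 𝕜 E) (hp : Continuous p) :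
    ∃ K, LipschitzWith K p := by
  obtain ⟨C, -, hC⟩ := p.bound_of_continuous_normedSpace hp
  refine ⟨C.toNNReal, LipschitzWith.of_le_add_mul' C fun x y => ?_⟩
  calc
    p x ≤ p y + p (x - y) := le_map_add_map_sub p x y
    _ ≤ p y + C * dist x y := by
      rw [dist_eq_norm]
      gcongr
      exact hC (x - y)

section FiniteDimensional

variable {E : Type*} [NormedAddCommGroup E] [NormedSpace ℝ E] [FiniteDimensional ℝ E]
  [MeasurableSpace E] [BorelSpace E] (μ : Measure E) [μ.IsAddHaarMeasure]

theorem ae_differentiableAt_seminorm (p : Seminorm ℝ E) : ∀ᵐ y ∂μ, DifferentiableAt ℝ p y := by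
  obtain ⟨K, hK⟩ :=
    exists_lipschitzWith_of_continuous_seminorm p p.convexOn.locallyLipschitz.continuous
  exact hK.ae_differentiableAt

theorem regular_pairing_ae_unique_on_Rn_general {P : WeakPairing E} {p : Seminorm ℝ E}
    (hP : P.IsRegular p) :
    ∀ᵐ y ∂μ, ∀ x : E, ∃ L : ℝ,
      Tendsto (fun h : ℝ => (p (y + h • x) - p y) / h) (𝓝[≠] 0) (𝓝 L) ∧
      P.pair x y = p y * L := by
  filter_upwards [ae_differentiableAt_seminorm μ p] with y hy x
  have hL : HasLineDerivAt ℝ p (fderiv ℝ p y x) y x := hy.hasFDerivAt.hasLineDerivAt x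
  refine ⟨_, ?_, hP.pair_eq_of_hasLineDerivAt hL⟩
  simpa only [smul_eq_mul, ← div_eq_inv_mul] using hL.tendsto_slope_zero

end FiniteDimensional

/-- for an arbitrary norm `N` on `ℝⁿ` and a regular pairing
compatible with it, for Lebesgue-almost every `y` the upper and lower JMT
pairings of `N` coincide with the pairing: the two-sided limit exists and
`⟦x,y⟧ = N(y)·lim_{h→0}(N(y+hx)−N(y))/h` for all `x`. -/
theorem regular_pairing_ae_unique_on_Rn
    (n : ℕ) (N : (Fin n → ℝ) → ℝ)
    (hNpos : ∀ z : Fin n → ℝ, z ≠ 0 → 0 < N z)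
    (hNhom : ∀ (α : ℝ) (z : Fin n → ℝ), N (α • z) = |α| * N z)
    (hNtri : ∀ z w : Fin n → ℝ, N (z + w) ≤ N z + N w)
    (P : WeakPairing (Fin n → ℝ)) (hcompat : ∀ x : Fin n → ℝ, P.pair x x = N x ^ 2)
    (hstraight : ∀ x : Fin n → ℝ, P.pair (-x) x = -N x ^ 2) :
    ∀ᵐ y ∂(volume : Measure (Fin n → ℝ)), ∀ x : Fin n → ℝ, ∃ L : ℝ,
      Tendsto (fun h : ℝ => (N (y + h • x) - N y) / h) (𝓝[≠] (0:ℝ)) (𝓝 L) ∧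
      P.pair x y = N y * L := by
  exact regular_pairing_ae_unique_on_Rn_general volume (p := Seminorm.of N hNtri hNhom)
    ⟨hcompat, hstraight⟩
end

section
/- Equip ℝⁿ with the ℓ∞ norm ‖y‖∞ = max_i |y_i| and for y ∈ ℝⁿ let I∞(y) := { i ∈ {1,…,n} : |y_i| = ‖y‖∞ }. Then for all x, y ∈ ℝⁿ, the function h ↦ ‖y‖∞·(‖y+hx‖∞ − ‖y‖∞)/h converges, as h → 0⁺, to max_{i ∈ I∞(y)} x_i·y_i. In other words, the max pairing ⟦x,y⟧∞ := max_{i ∈ I∞(y)} x_i y_i equals the upper JMT pairing of the ℓ∞ norm. -/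
open Filter Topology
open scoped RealInnerProductSpace

/-!
Near `y` the sup norm is the maximum of the coordinate norms over the indices where it is attained
at `y`. So for small `h > 0` its difference quotient at `y` is the maximum, over these indices, of
the difference quotients of the coordinate norms. Limits commute with finite maxima, and in an inner
product space the upper JMT pairing is the inner product.
-/

/-- `p` is the value `⟦x, y⟧₊` of the upper JMT pairing; a relation rather than a function, so that
it includes the convergence of the difference quotient. -/
def HasUpperJMTPairing {E : Type*} [SeminormedAddCommGroup E] [NormedSpace ℝ E]
    (x y : E) (p : ℝ) : Prop :=
  Tendsto (fun h : ℝ => ‖y‖ * ((‖y + h • x‖ - ‖y‖) / h)) (𝓝[>] 0) (𝓝 p)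

section Inner

variable {E : Type*} [NormedAddCommGroup E] [InnerProductSpace ℝ E]

theorem hasDerivAt_norm_add_smul (x : E) {y : E} (hy : y ≠ 0) :
    HasDerivAt (fun h : ℝ => ‖y + h • x‖) (⟪x, y⟫ / ‖y‖) 0 := by
  have hline : HasDerivAt (fun h : ℝ => y + h • x) x 0 := by
    simpa using ((hasDerivAt_id (0 : ℝ)).smul_const x).const_add y
  have hsqrt := hline.norm_sq.sqrt (by simpa using hy)
  simpa [real_inner_comm, mul_div_mul_left] using hsqrt

theorem hasUpperJMTPairing_inner (x y : E) : HasUpperJMTPairing x y ⟪x, y⟫ := by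
  rcases eq_or_ne y 0 with rfl | hy
  · simp [HasUpperJMTPairing]
  · have hslope := (hasDerivAt_norm_add_smul x hy).tendsto_slope_zero_right.const_mul ‖y‖
    simpa [HasUpperJMTPairing, div_eq_inv_mul, mul_inv_cancel_left₀ (norm_ne_zero_iff.2 hy)]
      using hslope

end Inner

section Pi

variable {ι : Type*} [Fintype ι] {E : ι → Type*} [∀ i, SeminormedAddCommGroup (E i)]

/-- The set `I∞(y)` of indices at which the sup norm of `y` is attained. -/
noncomputable def peakIndices (y : ∀ i, E i) : Finset ι := {i | ‖y i‖ = ‖y‖}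

theorem mem_peakIndices {y : ∀ i, E i} {i : ι} : i ∈ peakIndices y ↔ ‖y i‖ = ‖y‖ := by
  simp [peakIndices]

variable [Nonempty ι]

theorem peakIndices_nonempty (y : ∀ i, E i) : (peakIndices y).Nonempty := by
  obtain ⟨i, hi⟩ := Finite.exists_max fun i => ‖y i‖
  exact ⟨i, mem_peakIndices.2 <|
    (norm_le_pi_norm y i).antisymm ((pi_norm_le_iff_of_nonempty y).2 hi)⟩

theorem eventually_norm_eq_sup'_peakIndices (y : ∀ i, E i) :
    ∀ᶠ z in 𝓝 y, ‖z‖ = (peakIndices y).sup' (peakIndices_nonempty y) fun i => ‖z i‖ := by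
  obtain ⟨j, hj⟩ := peakIndices_nonempty y
  have hdom : ∀ᶠ z in 𝓝 y, ∀ i, i ∉ peakIndices y → ‖z i‖ < ‖z j‖ := by
    refine eventually_all.2 fun i => eventually_imp_distrib_left.2 fun hi => ?_
    have hlt : ‖y i‖ < ‖y j‖ := by
      rw [mem_peakIndices.1 hj]
      exact (norm_le_pi_norm y i).lt_of_ne (mt mem_peakIndices.2 hi)
    exact ((continuous_apply i).norm.tendsto y).eventually_lt
      ((continuous_apply j).norm.tendsto y) hlt
  filter_upwards [hdom] with z hz
  refine le_antisymm ((pi_norm_le_iff_of_nonempty z).2 fun i => ?_)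
    (Finset.sup'_le _ _ fun i _ => norm_le_pi_norm z i)
  by_cases hi : i ∈ peakIndices y
  · exact Finset.le_sup' (fun i => ‖z i‖) hi
  · exact (hz i hi).le.trans (Finset.le_sup' (fun i => ‖z i‖) hj)

theorem HasUpperJMTPairing.pi [∀ i, NormedSpace ℝ (E i)] {x y : ∀ i, E i} {p : ι → ℝ}
    (hp : ∀ i ∈ peakIndices y, HasUpperJMTPairing (x i) (y i) (p i)) :
    HasUpperJMTPairing x y ((peakIndices y).sup' (peakIndices_nonempty y) p) := by
  have hline : Tendsto (fun h : ℝ => y + h • x) (𝓝[>] 0) (𝓝 y) :=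
    tendsto_nhdsWithin_of_tendsto_nhds <| Continuous.tendsto' (by fun_prop) _ _ (by simp)
  refine (Tendsto.finset_sup'_nhds_apply (peakIndices_nonempty y) hp).congr' ?_
  filter_upwards [hline.eventually (eventually_norm_eq_sup'_peakIndices y), self_mem_nhdsWithin]
    with h hnorm (hpos : 0 < h)
  have hmono : Monotone fun r : ℝ => ‖y‖ * ((r - ‖y‖) / h) := by
    intro r s hrs
    dsimp only
    gcongr
  rw [hnorm]
  calc (peakIndices y).sup' (peakIndices_nonempty y)
          (fun i => ‖y i‖ * ((‖y i + h • x i‖ - ‖y i‖) / h))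
      = (peakIndices y).sup' (peakIndices_nonempty y)
          (fun i => ‖y‖ * ((‖y i + h • x i‖ - ‖y‖) / h)) :=
        Finset.sup'_congr _ rfl fun i hi => by rw [mem_peakIndices.1 hi]
    _ = ‖y‖ * (((peakIndices y).sup' (peakIndices_nonempty y) (fun i => ‖y i + h • x i‖) - ‖y‖)
          / h) :=
        (Finset.apply_sup'_eq_sup'_comp _ (fun r => ‖y‖ * ((r - ‖y‖) / h)) hmono.map_sup).symm

end Pi

theorem max_pairing_is_upper_JMT_general {ι : Type*} [Fintype ι] [Nonempty ι] {E : ι → Type*}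
    [∀ i, NormedAddCommGroup (E i)] [∀ i, InnerProductSpace ℝ (E i)] (x y : ∀ i, E i) :
    HasUpperJMTPairing x y (sSup {r : ℝ | ∃ i, ‖y i‖ = ‖y‖ ∧ r = ⟪x i, y i⟫}) := by
  have himage : {r : ℝ | ∃ i, ‖y i‖ = ‖y‖ ∧ r = ⟪x i, y i⟫} =
      (fun i => ⟪x i, y i⟫) '' peakIndices y := by
    ext r
    simp [mem_peakIndices, eq_comm]
  rw [himage, ← Finset.sup'_eq_csSup_image _ (peakIndices_nonempty y)]
  exact .pi fun i _ => hasUpperJMTPairing_inner (x i) (y i)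

/-- the max pairing `⟦x,y⟧∞ = max_{i ∈ I∞(y)} x_i y_i` is the
upper JMT pairing of the `ℓ∞` norm on `ℝⁿ`. -/
theorem max_pairing_is_upper_JMT
    (n : ℕ) [Nonempty (Fin n)] (x y : Fin n → ℝ)
    (N : (Fin n → ℝ) → ℝ) (hN : ∀ z : Fin n → ℝ, N z = ⨆ i, |z i|) :
    Tendsto (fun h : ℝ => N y * ((N (y + h • x) - N y) / h)) (𝓝[>] (0:ℝ))
      (𝓝 (sSup {r : ℝ | ∃ i : Fin n, |y i| = N y ∧ r = x i * y i})) := by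
  obtain rfl : N = norm := funext fun z => (hN z).trans (IsGreatest.pi_norm z).csSup_eq
  simpa [HasUpperJMTPairing, mul_comm] using max_pairing_is_upper_JMT_general x y
end
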